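/- Define D(X,Y) = det H(X,Y). For all unitary d×d matrices A, B and all complex d×d matrices X, Y: D(AXB, AYB) = D(X,Y). -/

import Mathlib

open Matrix Kronecker
open scoped ComplexOrder

/-- `vec(Z)`: the column vector (indexed by `(column, row)` in column-stacking order)
obtained by stacking the columns of `Z`. -/
def vecCol {d : ℕ} (Z : Matrix (Fin d) (Fin d) ℂ) : Fin d × Fin d → ℂ :=
  fun p => Z p.2 p.1

/-- The hermitian matrix `H(X,Y) = H₁ - ½(H₂ + H₃) + ¼H₄` of order `2d²`, where in 2×2
block form (blocks of order `d²`, block indices from `![X, Y]`):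
`H₁ = [[‖X‖², tr(X†Y)],[tr(Y†X), ‖Y‖²]] ⊗ I_{d²}`, `H₂ = [[X†X, X†Y],[Y†X, Y†Y]] ⊗ I_d`,
`H₃` has blocks `I_d ⊗ (entrywise conj)·(transpose)`, and `H₄` has blocks
`vec(·)* vec(·)ᵀ`. -/
noncomputable def Hmat {d : ℕ} (X Y : Matrix (Fin d) (Fin d) ℂ) :
    Matrix (Fin 2 × Fin d × Fin d) (Fin 2 × Fin d × Fin d) ℂ :=
  Matrix.of fun p q =>
    ((![X, Y] p.1)ᴴ * ![X, Y] q.1).trace * (if p.2 = q.2 then 1 else 0)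
    - (1 / 2) * (((![X, Y] p.1)ᴴ * ![X, Y] q.1) p.2.1 q.2.1 *
          (if p.2.2 = q.2.2 then 1 else 0)
        + (if p.2.1 = q.2.1 then 1 else 0) *
          ((![X, Y] p.1)ᴴᵀ * (![X, Y] q.1)ᵀ) p.2.2 q.2.2)
    + (1 / 4) * ((starRingEnd ℂ) (vecCol (![X, Y] p.1) p.2) * vecCol (![X, Y] q.1) q.2)

/-!
Since `vec(AXB)ᵀ = vec(X)ᵀ (B ⊗ Aᵀ)`, multiplication by `A` and `B` is the action of the single
unitary matrix `W = B ⊗ Aᵀ` on vectorized matrices. Moreover `X†Y` becomes `B†(X†Y)B` because `A`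
is unitary, and `YX†` becomes `A(YX†)A†` because `B` is. Hence each of the four terms of a
`d² × d²` block of `H(X,Y)` is conjugated by `W`, so `H(X,Y)` is conjugated by the unitary matrix
`I₂ ⊗ W` and its determinant does not change.
-/

section BlockMatrix

variable {R ι κ : Type*} [CommRing R] [Fintype ι] [DecidableEq ι] [Fintype κ] [DecidableEq κ]

lemma det_comp_map_conj_of_mul_eq_one {U V : Matrix κ κ R} (hUV : U * V = 1)
    (M : Matrix ι ι (Matrix κ κ R)) :
    (comp ι ι κ κ R (M.map fun N => U * N * V)).det = (comp ι ι κ κ R M).det := by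
  have hconj : M.map (fun N => U * N * V) = diagonal (fun _ => U) * M * diagonal fun _ => V := by
    ext1 i j
    simp only [map_apply, mul_diagonal, diagonal_mul]
  have hdiag : diagonal (fun _ : ι => U) * diagonal (fun _ => V) = 1 := by
    rw [diagonal_mul_diagonal, hUV, diagonal_one]
  have hcomp : compRingEquiv ι κ R (diagonal fun _ => U) *
      compRingEquiv ι κ R (diagonal fun _ => V) = 1 := by
    rw [← map_mul, hdiag, map_one]
  simp only [hconj, ← compRingEquiv_apply, map_mul]
  exact det_conj_of_mul_eq_one hcomp (mul_eq_one_comm.mp hcomp)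

end BlockMatrix

section Substitution

variable {R l m n p : Type*} [Fintype m] [Fintype n]

lemma conjTranspose_mul_of_left_isometry [Fintype l] [DecidableEq m] [Semiring R] [StarRing R]
    {A : Matrix l m R} (hA : Aᴴ * A = 1) (B : Matrix n p R) (X Y : Matrix m n R) :
    (A * X * B)ᴴ * (A * Y * B) = Bᴴ * (Xᴴ * Y) * B := by
  calc (A * X * B)ᴴ * (A * Y * B) = Bᴴ * (Xᴴ * (Aᴴ * A) * Y) * B := by
        simp only [conjTranspose_mul, Matrix.mul_assoc]
    _ = Bᴴ * (Xᴴ * Y) * B := by rw [hA, Matrix.mul_one]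

lemma mul_conjTranspose_of_right_coisometry [Fintype p] [DecidableEq n] [Semiring R] [StarRing R]
    {B : Matrix n p R} (hB : B * Bᴴ = 1) (A : Matrix l m R) (X Y : Matrix m n R) :
    (A * Y * B) * (A * X * B)ᴴ = A * (Y * Xᴴ) * Aᴴ := by
  calc (A * Y * B) * (A * X * B)ᴴ = A * (Y * (B * Bᴴ) * Xᴴ) * Aᴴ := by
        simp only [conjTranspose_mul, Matrix.mul_assoc]
    _ = A * (Y * Xᴴ) * Aᴴ := by rw [hB, Matrix.mul_one]

lemma trace_conjTranspose_mul_of_isometry [Fintype l] [Fintype p] [DecidableEq m] [DecidableEq n]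
    [CommSemiring R] [StarRing R] {A : Matrix l m R} {B : Matrix n p R} (hA : Aᴴ * A = 1)
    (hB : B * Bᴴ = 1) (X Y : Matrix m n R) :
    ((A * X * B)ᴴ * (A * Y * B)).trace = (Xᴴ * Y).trace := by
  rw [conjTranspose_mul_of_left_isometry hA, trace_mul_cycle, hB, Matrix.one_mul]

lemma vecMulVec_star_vec_mul_mul [CommSemiring R] [StarRing R] (A : Matrix l m R)
    (B : Matrix n p R) (X Y : Matrix m n R) :
    vecMulVec (star (vec (A * X * B))) (vec (A * Y * B)) =
      (B ⊗ₖ Aᵀ)ᴴ * vecMulVec (star (vec X)) (vec Y) * (B ⊗ₖ Aᵀ) := by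
  have hvec (Z : Matrix m n R) : vec (A * Z * B) = vec Z ᵥ* (B ⊗ₖ Aᵀ) := by
    rw [vec_vecMul_kronecker, transpose_transpose]
  rw [hvec, hvec, star_vecMul, ← vecMulVec_mul, ← mul_vecMulVec, Matrix.mul_assoc]

end Substitution

section Covariance

variable {R m n : Type*} [CommRing R] [StarRing R] [Fintype m] [DecidableEq m] [Fintype n]
  [DecidableEq n] {A : Matrix m m R} {B : Matrix n n R}

lemma kronecker_transpose_mem_unitaryGroup (hA : A ∈ unitaryGroup m R)
    (hB : B ∈ unitaryGroup n R) : B ⊗ₖ Aᵀ ∈ unitaryGroup (n × m) R :=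
  kronecker_mem_unitary hB (transpose_mem_unitaryGroup_iff.mpr hA)

/-- The block of `H` in the row of `X` and the column of `Y`, for rectangular matrices and with
arbitrary coefficients: `a tr(X†Y) I + b (X†Y) ⊗ I + c I ⊗ (YX†)ᵀ + e vec(X)* vec(Y)ᵀ`. Here
`(YX†)ᵀ = X*Yᵀ`, and `H(X,Y)` has `(a, b, c, e) = (1, -1/2, -1/2, 1/4)`. -/
def hBlock (a b c e : R) (X Y : Matrix m n R) : Matrix (n × m) (n × m) R :=
  a • (Xᴴ * Y).trace • 1 + b • (Xᴴ * Y) ⊗ₖ (1 : Matrix m m R) +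
    c • (1 : Matrix n n R) ⊗ₖ (Y * Xᴴ)ᵀ + e • vecMulVec (star (vec X)) (vec Y)

lemma hBlock_conj_of_mem_unitaryGroup (hA : A ∈ unitaryGroup m R) (hB : B ∈ unitaryGroup n R)
    (a b c e : R) (X Y : Matrix m n R) :
    hBlock a b c e (A * X * B) (A * Y * B) =
      (B ⊗ₖ Aᵀ)ᴴ * hBlock a b c e X Y * (B ⊗ₖ Aᵀ) := by
  have hWW : (B ⊗ₖ Aᵀ)ᴴ * (B ⊗ₖ Aᵀ) = 1 :=
    mem_unitaryGroup_iff'.mp (kronecker_transpose_mem_unitaryGroup hA hB)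
  have hAAt : Aᵀᴴ * Aᵀ = 1 := mem_unitaryGroup_iff'.mp (transpose_mem_unitaryGroup_iff.mpr hA)
  have hAA : Aᴴ * A = 1 := mem_unitaryGroup_iff'.mp hA
  have hBB : Bᴴ * B = 1 := mem_unitaryGroup_iff'.mp hB
  have hBB' : B * Bᴴ = 1 := mem_unitaryGroup_iff.mp hB
  have hleft : (Bᴴ * (Xᴴ * Y) * B) ⊗ₖ (1 : Matrix m m R) =
      (B ⊗ₖ Aᵀ)ᴴ * (Xᴴ * Y) ⊗ₖ 1 * (B ⊗ₖ Aᵀ) := by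
    rw [conjTranspose_kronecker, ← mul_kronecker_mul, ← mul_kronecker_mul, Matrix.mul_one, hAAt]
  have hright : (1 : Matrix n n R) ⊗ₖ (A * (Y * Xᴴ) * Aᴴ)ᵀ =
      (B ⊗ₖ Aᵀ)ᴴ * 1 ⊗ₖ (Y * Xᴴ)ᵀ * (B ⊗ₖ Aᵀ) := by
    rw [conjTranspose_kronecker, ← mul_kronecker_mul, ← mul_kronecker_mul, Matrix.mul_one, hBB,
      transpose_mul, transpose_mul A, ← Matrix.mul_assoc,
      conjTranspose_transpose_eq_transpose_conjTranspose]
  unfold hBlock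
  rw [trace_conjTranspose_mul_of_isometry hAA hBB', conjTranspose_mul_of_left_isometry hAA,
    mul_conjTranspose_of_right_coisometry hBB', vecMulVec_star_vec_mul_mul, hleft, hright]
  simp only [Matrix.mul_add, Matrix.add_mul, Matrix.mul_smul, Matrix.smul_mul, Matrix.mul_one, hWW]

/-- The matrix `H` of a family `Z` of matrices, with blocks `hBlock a b c e (Z i) (Z j)`. -/
def familyHmat {ι : Type*} (a b c e : R) (Z : ι → Matrix m n R) :
    Matrix (ι × n × m) (ι × n × m) R :=
  comp ι ι (n × m) (n × m) R (of fun i j => hBlock a b c e (Z i) (Z j))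

theorem det_Hmat_unitary_invariant_general {ι : Type*} [Fintype ι] [DecidableEq ι]
    (hA : A ∈ unitaryGroup m R) (hB : B ∈ unitaryGroup n R) (a b c e : R)
    (Z : ι → Matrix m n R) :
    (familyHmat a b c e fun i => A * Z i * B).det = (familyHmat a b c e Z).det := by
  have hWW : (B ⊗ₖ Aᵀ)ᴴ * (B ⊗ₖ Aᵀ) = 1 :=
    mem_unitaryGroup_iff'.mp (kronecker_transpose_mem_unitaryGroup hA hB)
  simp only [familyHmat, hBlock_conj_of_mem_unitaryGroup hA hB]
  exact det_comp_map_conj_of_mul_eq_one hWW _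

end Covariance

lemma Hmat_eq_familyHmat {d : ℕ} (X Y : Matrix (Fin d) (Fin d) ℂ) :
    Hmat X Y = familyHmat 1 (-1 / 2) (-1 / 2) (1 / 4) ![X, Y] := by
  ext ⟨i, p⟩ ⟨j, q⟩
  simp only [Hmat, familyHmat, hBlock, comp_apply, of_apply, Matrix.add_apply, Matrix.smul_apply,
    smul_eq_mul, one_apply, kroneckerMap_apply, vecMulVec_apply, transpose_mul]
  simp only [vecCol, vec, Pi.star_apply, starRingEnd_apply]
  ring

/-- `D(X,Y) = det H(X,Y)` is invariant under `X ↦ AXB`, `Y ↦ AYB` for unitary `A, B`. -/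
theorem det_Hmat_unitary_invariant (d : ℕ) (A B : Matrix (Fin d) (Fin d) ℂ)
    (hA : A ∈ Matrix.unitaryGroup (Fin d) ℂ) (hB : B ∈ Matrix.unitaryGroup (Fin d) ℂ)
    (X Y : Matrix (Fin d) (Fin d) ℂ) :
    (Hmat (A * X * B) (A * Y * B)).det = (Hmat X Y).det := by
  have hfamily : ![A * X * B, A * Y * B] = fun i => A * ![X, Y] i * B := by
    ext1 i; fin_cases i <;> rfl
  rw [Hmat_eq_familyHmat, Hmat_eq_familyHmat, hfamily, det_Hmat_unitary_invariant_general hA hB]
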